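/- arXiv:2508.19458 — 2 statements merged into one kernel-verified Lean document; each statement's English description precedes it below -/
import Mathlib

section
/- Fix d ≥ 7 and a unit vector y ∈ ℝ^d. Let v be uniformly distributed on the unit sphere S^{d-1} and set Σ_v = I_d - vvᵀ + (1/(31d))vvᵀ. Then with probability at least 3/5, yᵀΣ_v⁻¹y ≥ 4. -/
/-!
By the Sherman–Morrison formula, for a unit vector `v` the quadratic form equals
`1 + (31d - 1)⟨v, y⟩²` (`quadForm_inv`), so it is at least `4` as soon as `⟨v, y⟩² ≥ 1/(10d)`.

With `v = g / ‖g‖` for a standard Gaussian `g`, it remains to bound the probability of the bad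
event `10 d ⟨y, g⟩² ≤ ‖g‖²` by `2/5`. Rotation invariance of the Gaussian measure reduces this to
the case where `y` is the first basis vector (`pi_dot_small`). There the event reads
`g₀² ≤ R / (10d - 1)`, where `R` is the sum of the squares of the other `d - 1` coordinates and is
independent of `g₀`. As the density of `g₀` is at most `1/2`, the conditional probability of the
event given `R` is at most `t = √(R / (10d - 1))`, and `t ≤ t² + 1/4`. Since `E R = d - 1`,
averaging gives at most `1/10 + 1/4 < 2/5` (`pi_first_coord_small`).
-/

open MeasureTheory ProbabilityTheory Matrix

/-- The uniform distribution on the unit sphere S^{d-1} ⊂ ℝ^d, realized as the law of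
g/‖g‖ for a standard Gaussian vector g (this is the unique rotation-invariant
probability measure on the sphere). -/
noncomputable def sphereUniform (d : ℕ) : Measure (Fin d → ℝ) :=
  (Measure.pi fun _ : Fin d => gaussianReal 0 1).map
    fun g => (Real.sqrt (∑ i, g i ^ 2))⁻¹ • g

/-- The standard Gaussian density is at most `1/2`, since `√(2π) ≥ 2`. -/
lemma gaussianReal_Icc_le (t : ℝ) :
    gaussianReal 0 1 (Set.Icc (-t) t) ≤ ENNReal.ofReal t := by
  rw [gaussianReal_apply 0 one_ne_zero]
  have hpdf : ∀ x, gaussianPDF 0 1 x ≤ ENNReal.ofReal (1 / 2) := by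
    intro x
    refine ENNReal.ofReal_le_ofReal ?_
    rw [gaussianPDFReal_def]
    have h1 : (2 : ℝ) ≤ Real.sqrt (2 * Real.pi * ((1 : NNReal) : ℝ)) := by
      apply Real.le_sqrt_of_sq_le
      have := Real.pi_gt_three
      norm_num
      linarith
    have h2 : (Real.sqrt (2 * Real.pi * ((1 : NNReal) : ℝ)))⁻¹ ≤ 1 / 2 := by
      rw [inv_le_comm₀ (by linarith) (by norm_num)]
      norm_num at h1 ⊢
      exact h1
    have h3 : Real.exp (-(x - 0) ^ 2 / (2 * ((1 : NNReal) : ℝ))) ≤ 1 := by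
      apply Real.exp_le_one_iff.2
      have := sq_nonneg (x - 0)
      simp only [NNReal.coe_one]
      linarith
    calc _ ≤ (1 / 2 : ℝ) * 1 := mul_le_mul h2 h3 (Real.exp_nonneg _) (by norm_num)
      _ = 1 / 2 := by norm_num
  calc _ ≤ ∫⁻ _ in Set.Icc (-t) t, ENNReal.ofReal (1 / 2) := lintegral_mono hpdf
    _ = ENNReal.ofReal t := by
      rw [setLIntegral_const, Real.volume_Icc, ← ENNReal.ofReal_mul (by norm_num)]
      congr 1
      ring

lemma integrable_eval_sq (n : ℕ) (i : Fin n) :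
    Integrable (fun z : Fin n → ℝ => z i ^ 2) (Measure.pi fun _ : Fin n => gaussianReal 0 1) :=
  integrable_comp_eval (μ := fun _ : Fin n => gaussianReal 0 1) (i := i)
    (f := fun x : ℝ => x ^ 2) (memLp_id_gaussianReal 2).integrable_sq

lemma integral_eval_sq (n : ℕ) (i : Fin n) :
    ∫ z : Fin n → ℝ, z i ^ 2 ∂(Measure.pi fun _ : Fin n => gaussianReal 0 1) = 1 := by
  have h := integral_comp_eval (μ := fun _ : Fin n => gaussianReal 0 1) (i := i)
    (f := fun x : ℝ => x ^ 2) (by fun_prop)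
  rw [h]
  have hv := variance_id_gaussianReal (μ := 0) (v := 1)
  rw [variance_of_integral_eq_zero (by fun_prop) (by simp)] at hv
  simpa using hv

/-- The event that the first coordinate of a standard Gaussian vector is small compared with
its norm. Conditionally on the other coordinates, the event is `|x₀| ≤ t` with
`t² = ∑ zᵢ² / (10n + 9)`; its probability is at most `t ≤ t² + 1/4`, and `E t² ≤ 1/10`. -/
lemma pi_first_coord_small (n : ℕ) :
    (Measure.pi fun _ : Fin (n + 1) => gaussianReal 0 1)
      {x | 10 * ((n + 1 : ℕ) : ℝ) * x 0 ^ 2 ≤ ∑ i, x i ^ 2} ≤ ENNReal.ofReal (2 / 5) := by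
  set c : ℝ := 10 * n + 9 with hc
  have hc0 : 0 < c := by positivity
  have hmp := measurePreserving_piFinSuccAbove (fun _ : Fin (n + 1) => gaussianReal 0 1) 0
  let B : Set (ℝ × (Fin n → ℝ)) := {p | c * p.1 ^ 2 ≤ ∑ i, p.2 i ^ 2}
  have hB : MeasurableSet B := measurableSet_le (by fun_prop) (by fun_prop)
  have hpre : {x : Fin (n + 1) → ℝ | 10 * ((n + 1 : ℕ) : ℝ) * x 0 ^ 2 ≤ ∑ i, x i ^ 2} =
      (MeasurableEquiv.piFinSuccAbove (fun _ : Fin (n + 1) => ℝ) 0) ⁻¹' B := by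
    ext x
    simp only [Set.mem_ofPred_eq, Set.mem_preimage, B, Fin.sum_univ_succ]
    simp only [MeasurableEquiv.piFinSuccAbove_apply, Fin.insertNthEquiv_symm_apply,
      Fin.removeNth_zero, Fin.tail]
    push_cast
    constructor <;> intro h <;> nlinarith
  rw [hpre, hmp.measure_preimage hB.nullMeasurableSet, Measure.prod_apply_symm hB]
  have hslice : ∀ z : Fin n → ℝ, gaussianReal 0 1 ((fun a => (a, z)) ⁻¹' B) ≤
      ENNReal.ofReal ((∑ i, z i ^ 2) / c + 1 / 4) := by
    intro z
    have hS : 0 ≤ (∑ i, z i ^ 2) / c := by positivity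
    have hsub : (fun a => (a, z)) ⁻¹' B ⊆
        Set.Icc (-Real.sqrt ((∑ i, z i ^ 2) / c)) (Real.sqrt ((∑ i, z i ^ 2) / c)) := by
      intro a ha
      have ha' : c * a ^ 2 ≤ ∑ i, z i ^ 2 := ha
      rw [Set.mem_Icc, ← abs_le]
      apply Real.abs_le_sqrt
      rw [le_div_iff₀ hc0]
      linarith
    refine (measure_mono hsub).trans ((gaussianReal_Icc_le _).trans ?_)
    apply ENNReal.ofReal_le_ofReal
    nlinarith [Real.sq_sqrt hS, sq_nonneg (Real.sqrt ((∑ i, z i ^ 2) / c) - 1 / 2)]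
  refine (lintegral_mono hslice).trans ?_
  have hint : Integrable (fun z : Fin n → ℝ => ∑ i, z i ^ 2)
      (Measure.pi fun _ : Fin n => gaussianReal 0 1) :=
    integrable_finsetSum _ fun i _ => integrable_eval_sq n i
  change ∫⁻ z : Fin n → ℝ, ENNReal.ofReal ((∑ i, z i ^ 2) / c + 1 / 4)
    ∂(Measure.pi fun _ : Fin n => gaussianReal 0 1) ≤ _
  have hadd : Integrable (fun z : Fin n → ℝ => (∑ i, z i ^ 2) / c + 1 / 4)
      (Measure.pi fun _ : Fin n => gaussianReal 0 1) :=
    (hint.div_const c).add (integrable_const _)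
  rw [← ofReal_integral_eq_lintegral_ofReal hadd
    (Filter.Eventually.of_forall fun z => by positivity)]
  apply ENNReal.ofReal_le_ofReal
  rw [integral_add (hint.div_const c) (integrable_const _), integral_div,
    integral_finsetSum _ fun i _ => integrable_eval_sq n i]
  simp only [integral_eval_sq, integral_const, Finset.sum_const, Finset.card_univ,
    Fintype.card_fin, nsmul_eq_mul, mul_one, probReal_univ, smul_eq_mul, one_mul]
  have : (n : ℝ) / c ≤ 1 / 10 := by
    rw [div_le_div_iff₀ hc0 (by norm_num)]
    linarith
  linarith

/-- By rotation invariance of the standard Gaussian, the first coordinate may be replaced by the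
component along any unit vector. -/
lemma pi_dot_small (n : ℕ) (y : Fin (n + 1) → ℝ) (hy : ∑ i, y i ^ 2 = 1) :
    (Measure.pi fun _ : Fin (n + 1) => gaussianReal 0 1)
      {g | 10 * ((n + 1 : ℕ) : ℝ) * (y ⬝ᵥ g) ^ 2 ≤ ∑ i, g i ^ 2} ≤ ENNReal.ofReal (2 / 5) := by
  let u : EuclideanSpace ℝ (Fin (n + 1)) := WithLp.toLp 2 y
  have hu : ‖u‖ = 1 := by
    have : ‖u‖ ^ 2 = 1 := by
      rw [EuclideanSpace.real_norm_sq_eq]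
      exact hy
    nlinarith [norm_nonneg u]
  obtain ⟨b, hb⟩ := Orthonormal.exists_orthonormalBasis_extension_of_card_eq
    (𝕜 := ℝ) (E := EuclideanSpace ℝ (Fin (n + 1))) (ι := Fin (n + 1)) (by simp) (v := fun _ => u) (s := {0})
    (by
      rw [orthonormal_iff_ite]
      rintro ⟨i, hi⟩ ⟨j, hj⟩
      obtain rfl : i = 0 := hi
      obtain rfl : j = 0 := hj
      simp [hu])
  have hb0 : b 0 = u := hb 0 rfl
  have hmap := (map_pi_eq_stdGaussian (ι := Fin (n + 1))).trans
    (stdGaussian_eq_map_pi_orthonormalBasis b)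
  let S : Set (EuclideanSpace ℝ (Fin (n + 1))) := {x | 10 * ((n + 1 : ℕ) : ℝ) * (inner ℝ u x) ^ 2 ≤ ‖x‖ ^ 2}
  have hS : MeasurableSet S := measurableSet_le (by fun_prop) (by fun_prop)
  have h := congrArg (fun μ => μ S) hmap
  simp only at h
  rw [Measure.map_apply (by fun_prop) hS, Measure.map_apply (by fun_prop) hS] at h
  have h1 : {g : Fin (n + 1) → ℝ | 10 * ((n + 1 : ℕ) : ℝ) * (y ⬝ᵥ g) ^ 2 ≤ ∑ i, g i ^ 2} =
      WithLp.toLp 2 ⁻¹' S := by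
    ext g
    simp only [S, Set.mem_preimage, Set.mem_ofPred_eq, EuclideanSpace.real_norm_sq_eq]
    have : inner ℝ u (WithLp.toLp 2 g) = y ⬝ᵥ g := by
      simp [u, PiLp.inner_apply, dotProduct, mul_comm]
    rw [this]
  have h2 : (fun x : Fin (n + 1) → ℝ => ∑ i, x i • b i) ⁻¹' S =
      {x | 10 * ((n + 1 : ℕ) : ℝ) * x 0 ^ 2 ≤ ∑ i, x i ^ 2} := by
    ext x
    have e1 : inner ℝ u (∑ i, x i • b i) = x 0 := by
      rw [← hb0]
      exact b.orthonormal.inner_right_fintype x 0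
    have e2 : ‖∑ i, x i • b i‖ ^ 2 = ∑ i, x i ^ 2 := by
      rw [← b.sum_sq_norm_inner_right]
      refine Finset.sum_congr rfl fun i _ => ?_
      rw [b.orthonormal.inner_right_fintype x i]
      simp
    simp only [S, Set.mem_preimage, Set.mem_ofPred_eq, e1, e2]
  rw [h1, h, h2]
  exact pi_first_coord_small n

/-- The Sherman–Morrison formula for `I - vvᵀ + c⁻¹ vvᵀ` with `v` a unit vector. -/
lemma inv_rank_one {d : ℕ} (v : Fin d → ℝ) (hv : v ⬝ᵥ v = 1) (c : ℝ) (hc : c ≠ 0) :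
    (1 - vecMulVec v v + (1 / c) • vecMulVec v v)⁻¹ = 1 + (c - 1) • vecMulVec v v := by
  apply Matrix.inv_eq_right_inv
  have hP : vecMulVec v v * vecMulVec v v = vecMulVec v v := by
    rw [vecMulVec_mul_vecMulVec, hv, one_smul]
  generalize vecMulVec v v = P at hP
  simp only [add_mul, sub_mul, mul_add, one_mul, mul_one, smul_mul_assoc, mul_smul_comm, hP]
  match_scalars <;> field_simp <;> ring

lemma quadForm_inv {d : ℕ} (v y : Fin d → ℝ) (hv : v ⬝ᵥ v = 1) (hy : ∑ i, y i ^ 2 = 1)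
    (c : ℝ) (hc : c ≠ 0) :
    y ⬝ᵥ ((1 - vecMulVec v v + (1 / c) • vecMulVec v v)⁻¹ *ᵥ y) =
      1 + (c - 1) * (y ⬝ᵥ v) ^ 2 := by
  have hy' : y ⬝ᵥ y = 1 := by simpa [dotProduct, sq] using hy
  rw [inv_rank_one v hv c hc, add_mulVec, smul_mulVec, vecMulVec_mulVec, one_mulVec]
  simp [dotProduct_add, dotProduct_smul, hy', dotProduct_comm v y, sq]

/-- For d ≥ 7, a fixed unit vector y ∈ ℝ^d, and v uniform on the unit sphere,
with Σ_v = I - vvᵀ + (1/(31d))vvᵀ, we have yᵀΣ_v⁻¹y ≥ 4 with probability ≥ 3/5. -/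
theorem stmt_13 (d : ℕ) (hd : 7 ≤ d) (y : Fin d → ℝ) (hy : ∑ i, y i ^ 2 = 1) :
    (3 : ENNReal) / 5 ≤
      sphereUniform d
        {v | 4 ≤ y ⬝ᵥ ((1 - vecMulVec v v + ((1 : ℝ) / (31 * d)) • vecMulVec v v)⁻¹ *ᵥ y)} := by
  obtain ⟨n, rfl⟩ : ∃ n, d = n + 1 := ⟨d - 1, by omega⟩
  have hbad := pi_dot_small n y hy
  set μ := Measure.pi fun _ : Fin (n + 1) => gaussianReal 0 1 with hμ
  set A : Set (Fin (n + 1) → ℝ) :=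
    {g | 10 * ((n + 1 : ℕ) : ℝ) * (y ⬝ᵥ g) ^ 2 ≤ ∑ i, g i ^ 2} with hA
  have hAm : MeasurableSet A := by
    refine measurableSet_le ?_ (by fun_prop)
    simp only [dotProduct]
    fun_prop
  have hgood : (3 : ENNReal) / 5 ≤ μ Aᶜ := by
    rw [prob_compl_eq_one_sub hAm]
    refine le_trans (le_of_eq ?_) (tsub_le_tsub_left hbad 1)
    rw [← ENNReal.ofReal_one, ← ENNReal.ofReal_sub _ (by norm_num)]
    norm_num [ENNReal.ofReal_div_of_pos]
  have hmeas : Measurable fun g : Fin (n + 1) → ℝ => (Real.sqrt (∑ i, g i ^ 2))⁻¹ • g := by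
    fun_prop
  refine hgood.trans (le_trans (measure_mono ?_) (Measure.le_map_apply hmeas.aemeasurable _))
  intro g hg
  have hg' : ∑ i, g i ^ 2 < 10 * ((n + 1 : ℕ) : ℝ) * (y ⬝ᵥ g) ^ 2 := not_le.1 hg
  set T := ∑ i, g i ^ 2 with hT
  have hT0 : 0 ≤ T := Finset.sum_nonneg fun i _ => sq_nonneg _
  -- The strict inequality excludes `g = 0`, where the normalization is meaningless.
  have hTpos : 0 < T := by
    refine lt_of_le_of_ne hT0 fun h0 => ?_
    have hz : g = 0 := by
      funext i
      have := (Finset.sum_eq_zero_iff_of_nonneg fun i _ => sq_nonneg (g i)).1 h0.symm i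
        (Finset.mem_univ i)
      simpa using this
    rw [← h0, hz] at hg'
    simp at hg'
  have hsq : (Real.sqrt T)⁻¹ ^ 2 = T⁻¹ := by rw [inv_pow, Real.sq_sqrt hT0]
  have hgg : g ⬝ᵥ g = T := by simp [hT, dotProduct, sq]
  have hunit : ((Real.sqrt T)⁻¹ • g) ⬝ᵥ ((Real.sqrt T)⁻¹ • g) = 1 := by
    rw [smul_dotProduct, dotProduct_smul, hgg, smul_eq_mul, smul_eq_mul, ← mul_assoc, ← sq, hsq,
      inv_mul_cancel₀ hTpos.ne']
  have hn : (1 : ℝ) ≤ ((n + 1 : ℕ) : ℝ) := by exact_mod_cast Nat.succ_pos n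
  rw [Set.mem_preimage, Set.mem_ofPred_eq, quadForm_inv _ y hunit hy _ (by positivity),
    dotProduct_smul, smul_eq_mul, mul_pow, hsq]
  set D : ℝ := ((n + 1 : ℕ) : ℝ)
  have h1 : 1 / (10 * D) ≤ T⁻¹ * (y ⬝ᵥ g) ^ 2 := by
    rw [inv_mul_eq_div, div_le_div_iff₀ (by positivity) hTpos]
    linarith
  have h2 : 3 ≤ (31 * D - 1) * (1 / (10 * D)) := by
    rw [mul_one_div, le_div_iff₀ (by positivity)]
    linarith
  have h3 := mul_le_mul_of_nonneg_left h1 (show 0 ≤ 31 * D - 1 by linarith)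
  linarith
end

section
/- Let d, m ∈ ℕ with 0 < m < d, and let Π be an orthogonal projection matrix onto a uniformly random m-dimensional subspace of ℝ^d. Conditionally on Π, let X₁,…,Xₙ be i.i.d. N(0, I_d + σ²Π) for σ > 0, and set Yᵢ = ΠXᵢ. Then the posterior distribution of Π given (X₁,…,Xₙ, Y₁,…,Yₙ) is the uniform distribution (with respect to the invariant measure on rank-m projections) on the set M = {Π' : Π'Xᵢ = Yᵢ for all i}. -/
/-! The posterior sits on `M` because `Y = ΠX` holds surely and the joint law of `((X, Y), Π)`
disintegrates along `(X, Y)`.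

Invariance comes from symmetry. The orthogonal group acts on everything at once, by
`Π ↦ R Π Rᵀ`, `X ↦ R X`, `Y ↦ R Y`. The prior is invariant and the standard Gaussian is rotation
invariant, so the law of `(Π, X)` is preserved (`map_diag_joint`); since `(R Π Rᵀ)(R X) = R (ΠX)`,
so is the law of `((X, Y), Π)`. Hence, for each fixed `R`, the posterior satisfies
`κ (R q) = R · κ q` for almost every `q`. A Haar-measure argument
(`ae_forall_stabilizer_map_eq`) removes the dependence of the null set on `R`: almost surely the
posterior at `q` is invariant under every `R` with `R q = q`, that is, every rotation fixing all
`Xᵢ` and `Yᵢ`. The likelihood is never computed, as it only enters through its equivariance.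
-/


open MeasureTheory ProbabilityTheory Matrix

/-- The centered Gaussian N(0, I_d + σ²P) for an orthogonal projection P, realized as the
law of z + (√(1+σ²) - 1)·Pz for a standard Gaussian z (whose covariance is I + σ²P when
P is an orthogonal projection). -/
noncomputable def gaussCovProj (d : ℕ) (σ : ℝ) (P : Matrix (Fin d) (Fin d) ℝ) :
    Measure (Fin d → ℝ) :=
  (Measure.pi fun _ : Fin d => gaussianReal 0 1).map
    fun z => z + (Real.sqrt (1 + σ ^ 2) - 1) • (P *ᵥ z)

/-- For a countably generated target, equality of two Markov kernels at a point amounts to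
countably many equations, one for each set of the countable algebra generated by a countable
generating family. -/
theorem measurableSet_kernel_eq {Z A : Type*} [MeasurableSpace Z] [MeasurableSpace A]
    [MeasurableSpace.CountablyGenerated A] (κ η : Kernel Z A) [IsMarkovKernel κ]
    [IsMarkovKernel η] : MeasurableSet {z | κ z = η z} := by
  set C := generateSetAlgebra (MeasurableSpace.countableGeneratingSet A) with hC
  have hgen : ‹MeasurableSpace A› = MeasurableSpace.generateFrom C := by
    rw [hC, generateFrom_generateSetAlgebra_eq,
      MeasurableSpace.generateFrom_countableGeneratingSet]
  have hcount : C.Countable :=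
    countable_generateSetAlgebra MeasurableSpace.countable_countableGeneratingSet
  have hpi : IsPiSystem C := fun s hs t ht _ =>
    isSetAlgebra_generateSetAlgebra.inter_mem hs ht
  have hmeas : ∀ s ∈ C, MeasurableSet s := fun s hs => by
    rw [hgen]; exact MeasurableSpace.measurableSet_generateFrom hs
  have : {z | κ z = η z} = ⋂ s ∈ C, {z | κ z s = η z s} := by
    ext z
    simp only [Set.mem_ofPred_eq, Set.mem_iInter]
    exact ⟨fun h s _ => by rw [h],
      fun h => ext_of_generate_finite C hgen hpi h (by simp)⟩
  rw [this]
  exact MeasurableSet.biInter hcount fun s hs =>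
    measurableSet_eq_fun (κ.measurable_coe (hmeas s hs)) (η.measurable_coe (hmeas s hs))

/-- Let a group `G` with a nonzero left-invariant measure act measurably on `A` and `B`. If the
joint law `ρ ⊗ₘ κ` is invariant under the diagonal action, then for almost every `q` the
conditional law `κ q` is invariant under the whole stabilizer of `q`.

Almost sure equivariance for each fixed group element does not suffice, because the exceptional
null set depends on that element while stabilizers may be null in `G`. Fubini gives, for almost
every `q`, the identity `g · κ (g⁻¹ q) = κ q` for almost every `g`; by left invariance it holds
at `g` and at `s * g` for a common `g`, and for `s` in the stabilizer comparing the two gives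
`s · κ q = κ q`. -/
theorem ae_forall_stabilizer_map_eq {G A B : Type*} [Group G] [MeasurableSpace G]
    [MeasurableMul₂ G] [MeasurableInv G] (h : Measure G) [h.IsMulLeftInvariant] [SFinite h]
    [NeZero h] [MeasurableSpace A] [MeasurableSpace.CountablyGenerated A] [MeasurableSpace B]
    (a : G → A → A) (b : G → B → B)
    (ha : Measurable fun x : G × A => a x.1 x.2) (hb : Measurable fun x : G × B => b x.1 x.2)
    (ha_mul : ∀ g k p, a (g * k) p = a g (a k p))
    (hb_mul : ∀ g k q, b (g * k) q = b g (b k q)) (hb_one : ∀ q, b 1 q = q)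
    (ρ : Measure B) [IsFiniteMeasure ρ] (κ : Kernel B A) [IsMarkovKernel κ]
    (hinv : ∀ g, (ρ ⊗ₘ κ).map (fun x => (b g x.1, a g x.2)) = ρ ⊗ₘ κ) :
    ∀ᵐ q ∂ρ, ∀ g, b g q = q → (κ q).map (a g) = κ q := by
  have ha' : ∀ g, Measurable (a g) := fun g => ha.comp measurable_prodMk_left
  have hb' : ∀ g, Measurable (b g) := fun g => hb.comp measurable_prodMk_left
  have hρ : ∀ g, ρ.map (b g) = ρ := fun g => by
    have := congrArg Measure.fst (hinv g)
    rw [Measure.fst_compProd, Measure.fst, Measure.map_map measurable_fst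
      (by have := ha' g; have := hb' g; fun_prop)] at this
    conv_rhs => rw [← this]
    conv_lhs => rw [← Measure.fst_compProd ρ κ]
    rw [Measure.fst, Measure.map_map (hb' g) measurable_fst]
    rfl
  -- For a fixed `g`, uniqueness of disintegrations makes `κ` equivariant almost everywhere.
  have key : ∀ g, ∀ᵐ q ∂ρ, (κ (b g⁻¹ q)).map (a g) = κ q := by
    intro g
    have hm : Measurable fun x : B × A => (b g x.1, a g x.2) := by
      have := ha' g; have := hb' g; fun_prop
    let η : Kernel B A := (κ.comap (b g⁻¹) (hb' _)).map (a g)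
    have hη : ∀ q, η q = (κ (b g⁻¹ q)).map (a g) := fun q => by
      rw [Kernel.map_apply _ (ha' g), Kernel.comap_apply]
    have : IsMarkovKernel η := Kernel.IsMarkovKernel.map _ (ha' g)
    have : ρ ⊗ₘ η = ρ ⊗ₘ κ := by
      refine Measure.ext_of_lintegral _ fun f hf => ?_
      rw [← hinv g, lintegral_map hf hm, Measure.lintegral_compProd hf,
        Measure.lintegral_compProd (f := fun x : B × A => f (b g x.1, a g x.2)) (hf.comp hm)]
      conv_lhs => rw [← hρ g]
      rw [lintegral_map hf.lintegral_kernel_prod_right' (hb' g)]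
      refine lintegral_congr fun q => ?_
      rw [hη, ← hb_mul, inv_mul_cancel, hb_one, lintegral_map (by fun_prop) (ha' g)]
    filter_upwards [(Kernel.compProd_eq_iff).1 this] with q hq
    rw [← hη, hq]
  have hbi : Measurable fun x : G × B => b x.1⁻¹ x.2 :=
    hb.comp (measurable_fst.inv.prodMk measurable_snd)
  have hpa : Measurable fun x : (G × B) × A => a x.1.1 x.2 :=
    ha.comp (measurable_fst.fst.prodMk measurable_snd)
  -- Fubini needs the equivariance relation to be jointly measurable in `(g, q)`, so both sides
  -- are written as kernels on `G × B`.
  let η : Kernel (G × B) A := (Kernel.id ×ₖ κ.comap _ hbi).map fun x => a x.1.1 x.2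
  have hη : ∀ g q, η (g, q) = (κ (b g⁻¹ q)).map (a g) := fun g q => by
    rw [Kernel.map_apply _ hpa, Kernel.prod_apply, Kernel.id_apply, Kernel.comap_apply,
      Measure.dirac_prod, Measure.map_map hpa measurable_prodMk_left]
    rfl
  have : IsMarkovKernel η := Kernel.IsMarkovKernel.map _ hpa
  have hset : MeasurableSet {x : G × B | (κ (b x.1⁻¹ x.2)).map (a x.1) = κ x.2} := by
    have := measurableSet_kernel_eq η (κ.comap Prod.snd measurable_snd)
    simpa only [hη, Kernel.comap_apply] using this
  have swap := (Measure.ae_ae_comm (μ := h) (ν := ρ) hset).1 (.of_forall key)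
  filter_upwards [swap] with q hq s hs
  have hq' := (eventually_mul_left_iff h s).2 hq
  obtain ⟨g, h1, h2⟩ := (hq.and hq').exists
  have e : b (s * g)⁻¹ q = b g⁻¹ q := by
    have : b s⁻¹ q = q := by
      conv_lhs => rw [← hs]
      rw [← hb_mul, inv_mul_cancel, hb_one]
    rw [_root_.mul_inv_rev, hb_mul, this]
  have e2 : a (s * g) = a s ∘ a g := funext fun p => ha_mul s g p
  rw [e, e2, ← Measure.map_map (ha' s) (ha' g), h1] at h2
  exact h2

theorem measurable_mulVec' {k : ℕ} (M : Matrix (Fin k) (Fin k) ℝ) :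
    Measurable fun z : Fin k → ℝ => M *ᵥ z := by
  refine measurable_pi_lambda _ fun i => ?_
  simp only [mulVec, dotProduct]
  fun_prop

theorem map_mulVec_pi_gaussianReal {d : ℕ} {R : Matrix (Fin d) (Fin d) ℝ}
    (hR : R ∈ orthogonalGroup (Fin d) ℝ) :
    (Measure.pi fun _ : Fin d => gaussianReal 0 1).map (fun z => R *ᵥ z)
      = Measure.pi fun _ : Fin d => gaussianReal 0 1 := by
  let u : unitary (EuclideanSpace ℝ (Fin d) →L[ℝ] EuclideanSpace ℝ (Fin d)) :=
    ⟨toEuclideanCLM (𝕜 := ℝ) R, Unitary.map_mem toEuclideanCLM hR⟩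
  have h := stdGaussian_map (Unitary.linearIsometryEquiv u)
  have hpi := map_pi_eq_stdGaussian (ι := Fin d)
  have hto : Measurable (WithLp.toLp 2 : (Fin d → ℝ) → EuclideanSpace ℝ (Fin d)) := by fun_prop
  have hof : Measurable (WithLp.ofLp : EuclideanSpace ℝ (Fin d) → (Fin d → ℝ)) := by fun_prop
  have hu : Measurable (Unitary.linearIsometryEquiv u) :=
    (Unitary.linearIsometryEquiv u).continuous.measurable
  have h2 := congrArg (Measure.map WithLp.ofLp) h
  rw [← hpi, Measure.map_map hu hto, Measure.map_map hof (hu.comp hto),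
    Measure.map_map hof hto] at h2
  have e : (WithLp.ofLp ∘ (WithLp.toLp 2 : (Fin d → ℝ) → EuclideanSpace ℝ (Fin d))) = id := rfl
  rw [e, Measure.map_id] at h2
  exact h2

/-- Rotating `N(0, I + σ²P)` gives `N(0, I + σ² R P Rᵀ)`: replace the standard Gaussian `z` by
`R z`, which has the same law. -/
theorem map_mulVec_gaussCovProj {d : ℕ} (σ : ℝ) {R : Matrix (Fin d) (Fin d) ℝ}
    (hR : R ∈ orthogonalGroup (Fin d) ℝ) (P : Matrix (Fin d) (Fin d) ℝ) :
    (gaussCovProj d σ P).map (fun x => R *ᵥ x) = gaussCovProj d σ (R * P * Rᵀ) := by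
  have hm : ∀ Q : Matrix (Fin d) (Fin d) ℝ, Measurable
      fun z : Fin d → ℝ => z + (Real.sqrt (1 + σ ^ 2) - 1) • (Q *ᵥ z) := fun Q =>
    measurable_id.add ((measurable_mulVec' Q).fun_const_smul _)
  have hRR : Rᵀ * R = 1 := (mem_orthogonalGroup_iff' _ _).1 hR
  rw [gaussCovProj, gaussCovProj, Measure.map_map (measurable_mulVec' R) (hm P)]
  conv_rhs => rw [← map_mulVec_pi_gaussianReal hR, Measure.map_map (hm _) (measurable_mulVec' R)]
  congr 1
  ext z i
  simp [mulVec_add, mulVec_smul, mulVec_mulVec, Matrix.mul_assoc, hRR]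

instance isProbabilityMeasure_gaussCovProj (d : ℕ) (σ : ℝ) (P : Matrix (Fin d) (Fin d) ℝ) :
    IsProbabilityMeasure (gaussCovProj d σ P) :=
  Measure.isProbabilityMeasure_map
    (measurable_id.add ((measurable_mulVec' P).fun_const_smul _)).aemeasurable

theorem measurable_conj {Z : Type*} [MeasurableSpace Z] {d : ℕ}
    {R : Z → Matrix (Fin d) (Fin d) ℝ} {p : Z → Fin d → Fin d → ℝ}
    (hR : ∀ i j, Measurable fun z => R z i j) (hp : Measurable p) :
    Measurable fun z => of.symm (R z * of (p z) * (R z)ᵀ) := by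
  refine measurable_pi_lambda _ fun i => measurable_pi_lambda _ fun j => ?_
  simp only [of_symm_apply, mul_apply, transpose_apply, of_apply]
  fun_prop

theorem measurable_mulVec_family {Z : Type*} [MeasurableSpace Z] {d n : ℕ}
    {R : Z → Matrix (Fin d) (Fin d) ℝ} {x : Z → Fin n → Fin d → ℝ}
    (hR : ∀ i j, Measurable fun z => R z i j) (hx : Measurable x) :
    Measurable fun z i => R z *ᵥ x z i := by
  refine measurable_pi_lambda _ fun i => measurable_pi_lambda _ fun j => ?_
  simp only [mulVec, dotProduct]
  fun_prop

/-- The joint law of `(Π, X)` is invariant under `(p, x) ↦ (R p Rᵀ, R x)` for orthogonal `R`. -/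
theorem map_diag_joint {d n : ℕ} (σ : ℝ) (ν : Measure (Fin d → Fin d → ℝ)) [IsFiniteMeasure ν]
    (κ : Kernel (Fin d → Fin d → ℝ) (Fin n → Fin d → ℝ)) [IsMarkovKernel κ]
    {R : Matrix (Fin d) (Fin d) ℝ} (hR : R ∈ orthogonalGroup (Fin d) ℝ)
    (hν : ν.map (fun p => of.symm (R * of p * Rᵀ)) = ν)
    (hκ : ∀ᵐ p ∂ν, κ p = Measure.pi fun _ : Fin n => gaussCovProj d σ (of p)) :
    (ν ⊗ₘ κ).map (fun x => (of.symm (R * of x.1 * Rᵀ), fun i => R *ᵥ x.2 i)) = ν ⊗ₘ κ := by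
  have hc : Measurable fun p : Fin d → Fin d → ℝ => of.symm (R * of p * Rᵀ) :=
    measurable_conj (fun _ _ => measurable_const) measurable_id
  have hx : Measurable fun (x : Fin n → Fin d → ℝ) i => R *ᵥ x i :=
    measurable_mulVec_family (fun _ _ => measurable_const) measurable_id
  have hm : Measurable fun x : (Fin d → Fin d → ℝ) × (Fin n → Fin d → ℝ) =>
      (of.symm (R * of x.1 * Rᵀ), fun i => R *ᵥ x.2 i) :=
    (hc.comp measurable_fst).prodMk (hx.comp measurable_snd)
  -- By invariance of `ν`, the Gaussian form of `κ` also holds at `R p Rᵀ` for almost every `p`.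
  have hκ' : ∀ᵐ p ∂ν, κ (of.symm (R * of p * Rᵀ))
      = Measure.pi fun _ : Fin n => gaussCovProj d σ (R * of p * Rᵀ) := by
    rw [← hν] at hκ
    exact ae_of_ae_map hc.aemeasurable hκ
  refine Measure.ext_of_lintegral _ fun f hf => ?_
  rw [lintegral_map hf hm, Measure.lintegral_compProd hf,
    Measure.lintegral_compProd (f := fun x : (Fin d → Fin d → ℝ) × (Fin n → Fin d → ℝ) =>
      f (of.symm (R * of x.1 * Rᵀ), fun i => R *ᵥ x.2 i)) (hf.comp hm)]
  conv_rhs => rw [← hν]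
  rw [lintegral_map hf.lintegral_kernel_prod_right' hc]
  refine lintegral_congr_ae ?_
  filter_upwards [hκ, hκ'] with p h1 h2
  have : κ (of.symm (R * of p * Rᵀ)) = (κ p).map fun x i => R *ᵥ x i := by
    have hsig : ∀ _ : Fin n, SigmaFinite ((gaussCovProj d σ (of p)).map fun x => R *ᵥ x) :=
      fun _ => by rw [map_mulVec_gaussCovProj σ hR]; infer_instance
    rw [h1, h2, Measure.pi_map_pi (f := fun _ x => R *ᵥ x)
      fun _ => (measurable_mulVec' R).aemeasurable]
    simp_rw [map_mulVec_gaussCovProj σ hR]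
  rw [this, lintegral_map (by fun_prop) hx]

/-- Posterior of a uniformly random rank-m orthogonal projection Π given Gaussian data.
The prior law of Π (encoded as `J`, with matrices represented as `Fin d → Fin d → ℝ`) is
supported on rank-m orthogonal projections and is rotation invariant (hence is the uniform
measure on the Grassmannian). Given Π, the Xᵢ (i < n) are i.i.d. N(0, I + σ²Π), and
Yᵢ = ΠXᵢ. Conclusion: a.s., the posterior of Π given (X,Y) is the uniform distribution on
M = {Π' : Π'Xᵢ = Yᵢ ∀i}, i.e. it is supported on M and invariant under every rotation
fixing all the Xᵢ and Yᵢ (the invariance inherited from the Grassmannian measure, which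
characterizes the uniform distribution on M). -/
theorem stmt_19 {Ω : Type*} [MeasurableSpace Ω] (μ : Measure Ω) [IsProbabilityMeasure μ]
    (d m n : ℕ) (hm0 : 0 < m) (hmd : m < d) (σ : ℝ) (hσ : 0 < σ)
    (J : Ω → (Fin d → Fin d → ℝ)) (X : Ω → (Fin n → Fin d → ℝ))
    (hJ : Measurable J) (hX : Measurable X)
    (hsupp : (μ.map J)
      {p | ¬ ((of p)ᵀ = of p ∧ of p * of p = of p ∧ (of p).rank = m)} = 0)
    (hrotinv : ∀ R : Matrix (Fin d) (Fin d) ℝ, R ∈ Matrix.orthogonalGroup (Fin d) ℝ →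
      (μ.map J).map (fun p => of.symm (R * of p * Rᵀ)) = μ.map J)
    (hcond : ∀ᵐ p ∂(μ.map J),
      condDistrib X J μ p = Measure.pi fun _ : Fin n => gaussCovProj d σ (of p)) :
    ∀ᵐ q ∂(μ.map fun ω => (X ω, fun i => of (J ω) *ᵥ X ω i)),
      (condDistrib J (fun ω => (X ω, fun i => of (J ω) *ᵥ X ω i)) μ q)
          {p | ¬ ∀ i, of p *ᵥ q.1 i = q.2 i} = 0
      ∧ ∀ R : Matrix (Fin d) (Fin d) ℝ, R ∈ Matrix.orthogonalGroup (Fin d) ℝ →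
          (∀ i, R *ᵥ q.1 i = q.1 i) → (∀ i, R *ᵥ q.2 i = q.2 i) →
          (condDistrib J (fun ω => (X ω, fun i => of (J ω) *ᵥ X ω i)) μ q).map
              (fun p => of.symm (R * of p * Rᵀ))
            = condDistrib J (fun ω => (X ω, fun i => of (J ω) *ᵥ X ω i)) μ q := by
  have hmulVec : Measurable fun x : (Fin d → Fin d → ℝ) × (Fin n → Fin d → ℝ) =>
      fun i => of x.1 *ᵥ x.2 i :=
    measurable_mulVec_family (fun i j => by simp only [of_apply]; fun_prop) measurable_snd
  set Q : Ω → (Fin n → Fin d → ℝ) × (Fin n → Fin d → ℝ) :=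
    fun ω => (X ω, fun i => of (J ω) *ᵥ X ω i) with hQdef
  have hQ : Measurable Q := hX.prodMk (hmulVec.comp (hJ.prodMk hX))
  have hprob : IsProbabilityMeasure (μ.map Q) := Measure.isProbabilityMeasure_map hQ.aemeasurable
  have hprobJ : IsProbabilityMeasure (μ.map J) := Measure.isProbabilityMeasure_map hJ.aemeasurable
  have hL : (μ.map Q) ⊗ₘ condDistrib J Q μ = μ.map fun ω => (Q ω, J ω) :=
    compProd_map_condDistrib hJ.aemeasurable
  have hM : (μ.map J) ⊗ₘ condDistrib X J μ = μ.map fun ω => (J ω, X ω) :=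
    compProd_map_condDistrib hX.aemeasurable
  refine Filter.Eventually.and ?_ ?_
  · have : ∀ᵐ x ∂((μ.map Q) ⊗ₘ condDistrib J Q μ), ∀ i, of x.2 *ᵥ x.1.1 i = x.1.2 i := by
      rw [hL]
      refine (ae_map_iff (hQ.prodMk hJ).aemeasurable ?_).2 (.of_forall fun ω i => rfl)
      have h1 : Measurable fun x : ((Fin n → Fin d → ℝ) × (Fin n → Fin d → ℝ)) ×
          (Fin d → Fin d → ℝ) => fun i => of x.2 *ᵥ x.1.1 i :=
        hmulVec.comp (measurable_snd.prodMk measurable_fst.fst)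
      have := measurableSet_eq_fun h1 measurable_fst.snd
      simpa only [funext_iff] using this
    exact Measure.ae_ae_of_ae_compProd this
  · let G := orthogonalGroup (Fin d) ℝ
    have : SecondCountableTopology (Matrix (Fin d) (Fin d) ℝ) :=
      inferInstanceAs (SecondCountableTopology (Fin d → Fin d → ℝ))
    have : LocallyCompactSpace (Matrix (Fin d) (Fin d) ℝ) :=
      inferInstanceAs (LocallyCompactSpace (Fin d → Fin d → ℝ))
    have : SecondCountableTopology G := TopologicalSpace.Subtype.secondCountableTopology _
    have : LocallyCompactSpace G := isClosed_unitary.locallyCompactSpace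
    let _ : MeasurableSpace G := borel G
    have : BorelSpace G := ⟨rfl⟩
    have hentry : ∀ i j, Measurable fun g : G => g.1 i j := fun i j =>
      (continuous_subtype_val.matrix_elem i j).measurable
    have main := ae_forall_stabilizer_map_eq (G := G) Measure.haar
      (fun g p => of.symm (g.1 * of p * g.1ᵀ))
      (fun g (q : (Fin n → Fin d → ℝ) × (Fin n → Fin d → ℝ)) =>
        (fun i => g.1 *ᵥ q.1 i, fun i => g.1 *ᵥ q.2 i))
      (measurable_conj (fun i j => (hentry i j).comp measurable_fst) measurable_snd)
      ((measurable_mulVec_family (fun i j => (hentry i j).comp measurable_fst)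
        measurable_snd.fst).prodMk
        (measurable_mulVec_family (fun i j => (hentry i j).comp measurable_fst)
        measurable_snd.snd))
      (fun g k p => by simp [Matrix.mul_assoc])
      (fun g k q => by simp [mulVec_mulVec])
      (fun q => by simp)
      (μ.map Q) (condDistrib J Q μ) ?_
    · filter_upwards [main] with q hq R hR h1 h2
      exact hq ⟨R, hR⟩ (Prod.ext (funext h1) (funext h2))
    · rintro ⟨R, hR⟩
      have hRR : Rᵀ * R = 1 := (mem_orthogonalGroup_iff' _ _).1 hR
      have inv := map_diag_joint σ (μ.map J) (condDistrib X J μ) hR (hrotinv R hR) hcond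
      -- `Φ (Π, X) = ((X, ΠX), Π)` intertwines the two diagonal actions, as `(R Π Rᵀ)(R x) = R (Π x)`.
      let Φ : (Fin d → Fin d → ℝ) × (Fin n → Fin d → ℝ) →
          ((Fin n → Fin d → ℝ) × (Fin n → Fin d → ℝ)) × (Fin d → Fin d → ℝ) :=
        fun x => ((x.2, fun i => of x.1 *ᵥ x.2 i), x.1)
      have hΦ : Measurable Φ := (measurable_snd.prodMk hmulVec).prodMk measurable_fst
      have hLM : (μ.map Q) ⊗ₘ condDistrib J Q μ
          = ((μ.map J) ⊗ₘ condDistrib X J μ).map Φ := by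
        rw [hL, hM, Measure.map_map hΦ (hJ.prodMk hX)]
        rfl
      have hc : ∀ i j, Measurable fun _ : (Fin d → Fin d → ℝ) × (Fin n → Fin d → ℝ) => R i j :=
        fun _ _ => measurable_const
      have hc' : ∀ i j, Measurable fun _ : ((Fin n → Fin d → ℝ) × (Fin n → Fin d → ℝ)) ×
          (Fin d → Fin d → ℝ) => R i j :=
        fun _ _ => measurable_const
      rw [hLM, Measure.map_map
        (((measurable_mulVec_family hc' measurable_fst.fst).prodMk
          (measurable_mulVec_family hc' measurable_fst.snd)).prodMk
            (measurable_conj hc' measurable_snd)) hΦ]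
      conv_rhs => rw [← inv, Measure.map_map hΦ ((measurable_conj hc measurable_fst).prodMk
        (measurable_mulVec_family hc measurable_snd))]
      congr 1
      ext x : 1
      simp [Φ, mulVec_mulVec, Matrix.mul_assoc, hRR]
end
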